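/- There exists a constant c > 0 with the following property. Let 0 < ζ̲ < 1, ζ̄ > 0, L > 0, S₀ > 0, τ ≥ 1, δ > 0, and let g : ℝ → ℝ be nondecreasing and L-Lipschitz with g(0) = 0. Let ε = c·δ²/(L²·τ²), and suppose ε < min(ζ̲, ζ̄), ε ≤ 1, and (ζ̲+ζ̄)/ε is a positive integer. Then the multinomial tree approximation value ĝ₀(S₀) satisfies g₀(S₀) − δ·S₀ ≤ ĝ₀(S₀) ≤ g₀(S₀), where g₀ and ĝ₀ are respectively the exact and discretized τ-round value functions. -/

import Mathlib

/-!
The proof takes `c = 1`, so that `ε = (δ / (L τ))²`.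

Since `1 + r ≥ 0` and `r` has mean zero, one step of the recursion maps `L`-Lipschitz functions
vanishing at `0` to functions of the same kind (`LipZero.stepValue`): the factor `1 + r` has mean
one, so the Lipschitz constant does not grow.

A risk-neutral measure `P` on the interval is rounded to the grid by splitting the mass at `r`
between the two neighbouring grid points in the proportions that preserve the mean; equivalently,
the grid point `r_k` receives the `P`-integral of the piecewise linear hat function centred at
`r_k`. No mass moves further than `ε`, so the expectation of a `K`-Lipschitz function changes by at
most `K ε` (`RiskNeutral.exists_round`). Hence each step costs at most `L ε |x|`, and earlier errors,
being of the form `C |x|`, are propagated without growth, again because `1 + r` has mean one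
(`stepValue_Icc_le_grid`). After `τ` steps the error is at most
`τ L ε S₀ = δ S₀ · δ / (L τ)`, and `ε ≤ 1` says exactly that `δ / (L τ) ≤ 1`.

The upper bound holds because the grid is contained in the interval.
-/

/-- The single-step value of the hedging recursion at price `x`: the supremum of the
expected payoff `∫ h (x * (1 + r)) dP(r)` over risk-neutral probability measures `P`
on the set `A` (i.e. probability measures with `P A = 1` and mean zero). -/
noncomputable def stepValue (A : Set ℝ) (h : ℝ → ℝ) (x : ℝ) : ℝ :=
  sSup {v : ℝ | ∃ P : MeasureTheory.Measure ℝ, MeasureTheory.IsProbabilityMeasure P ∧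
    P A = 1 ∧ (∫ r, r ∂P) = 0 ∧ v = ∫ r, h (x * (1 + r)) ∂P}

/-- The `ε`-grid discretization `{-ζd, -ζd + ε, -ζd + 2ε, …, -ζd + nε}` of the
interval `[-ζd, -ζd + nε]`. -/
def gridSet (ζd ε : ℝ) (n : ℕ) : Set ℝ := {r : ℝ | ∃ k : ℕ, k ≤ n ∧ r = -ζd + k * ε}

open MeasureTheory

/-- `P` is a risk-neutral probability measure on `A`. -/
def RiskNeutral (A : Set ℝ) (P : Measure ℝ) : Prop :=
  IsProbabilityMeasure P ∧ P A = 1 ∧ (∫ r, r ∂P) = 0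

/-- `h` is `L`-Lipschitz and vanishes at the origin. -/
def LipZero (L : ℝ) (h : ℝ → ℝ) : Prop :=
  (∀ x y, |h x - h y| ≤ L * |x - y|) ∧ h 0 = 0

lemma continuous_of_abs_le {K : ℝ} (hK : 0 ≤ K) {f : ℝ → ℝ}
    (hf : ∀ x y, |f x - f y| ≤ K * |x - y|) : Continuous f := by
  have : LipschitzWith ⟨K, hK⟩ f := LipschitzWith.of_dist_le_mul fun x y => by
    rw [Real.dist_eq, Real.dist_eq]
    exact hf x y
  exact this.continuous

lemma LipZero.comp_step {L : ℝ} {h : ℝ → ℝ} (hh : LipZero L h) (x r s : ℝ) :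
    |h (x * (1 + r)) - h (x * (1 + s))| ≤ (L * |x|) * |r - s| := by
  refine (hh.1 _ _).trans (le_of_eq ?_)
  rw [show x * (1 + r) - x * (1 + s) = x * (r - s) by ring, abs_mul]
  ring

/-! ### Risk-neutral measures on an interval -/

lemma RiskNeutral.mono {A B : Set ℝ} {P : Measure ℝ} (hAB : A ⊆ B) (hP : RiskNeutral A P) :
    RiskNeutral B P := by
  obtain ⟨h1, h2, h3⟩ := hP
  exact ⟨h1, le_antisymm prob_le_one (h2 ▸ measure_mono hAB), h3⟩

lemma RiskNeutral.ae_mem {a b : ℝ} {P : Measure ℝ} (hP : RiskNeutral (Set.Icc a b) P) :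
    ∀ᵐ r ∂P, r ∈ Set.Icc a b := by
  have := hP.1
  exact (mem_ae_iff_prob_eq_one measurableSet_Icc).2 hP.2.1

lemma RiskNeutral.integrable {a b : ℝ} {P : Measure ℝ} (hP : RiskNeutral (Set.Icc a b) P)
    {f : ℝ → ℝ} (hf : Continuous f) : Integrable f P := by
  have := hP.1
  obtain ⟨C, hC⟩ := (isCompact_Icc (a := a) (b := b)).exists_bound_of_continuousOn hf.continuousOn
  exact Integrable.of_bound hf.aestronglyMeasurable C (hP.ae_mem.mono fun r hr => hC r hr)

lemma RiskNeutral.integral_mul_one_add {a b : ℝ} {P : Measure ℝ}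
    (hP : RiskNeutral (Set.Icc a b) P) (C : ℝ) : ∫ r, C * (1 + r) ∂P = C := by
  have := hP.1
  rw [integral_const_mul, integral_add (integrable_const _) (hP.integrable continuous_id'), hP.2.2]
  simp

lemma LipZero.continuous_step {L : ℝ} {h : ℝ → ℝ} (hL : 0 ≤ L) (hh : LipZero L h) (x : ℝ) :
    Continuous fun r => h (x * (1 + r)) :=
  (continuous_of_abs_le hL hh.1).comp (by fun_prop)

/-- An error bound `C |·|` passes through an expectation unchanged, because `1 + r` is nonnegative
and has mean one. -/
lemma RiskNeutral.integral_le_add {b d L C : ℝ} (hd : d < 1) {P : Measure ℝ}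
    (hP : RiskNeutral (Set.Icc (-d) b) P) {h₁ h₂ : ℝ → ℝ} (hL : 0 ≤ L) (hh₁ : LipZero L h₁)
    (hh₂ : LipZero L h₂) (x y : ℝ)
    (hle : ∀ s, 0 ≤ s → h₁ (x * s) ≤ h₂ (y * s) + C * s) :
    ∫ r, h₁ (x * (1 + r)) ∂P ≤ ∫ r, h₂ (y * (1 + r)) ∂P + C := by
  calc ∫ r, h₁ (x * (1 + r)) ∂P
      ≤ ∫ r, (h₂ (y * (1 + r)) + C * (1 + r)) ∂P := by
        refine integral_mono_ae (hP.integrable (hh₁.continuous_step hL x))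
          (hP.integrable ((hh₂.continuous_step hL y).add (by fun_prop))) ?_
        filter_upwards [hP.ae_mem] with r hr
        exact hle _ (by linarith [hr.1])
    _ = _ := by
        rw [integral_add (hP.integrable (hh₂.continuous_step hL y)) (hP.integrable (by fun_prop)),
          hP.integral_mul_one_add]

lemma LipZero.zero {L : ℝ} (hL : 0 ≤ L) : LipZero L fun _ => 0 :=
  ⟨fun x y => by simpa using mul_nonneg hL (abs_nonneg _), rfl⟩

lemma RiskNeutral.integral_le {b d L : ℝ} (hd : d < 1) {P : Measure ℝ}
    (hP : RiskNeutral (Set.Icc (-d) b) P) {h : ℝ → ℝ} (hL : 0 ≤ L) (hh : LipZero L h) (x : ℝ) :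
    ∫ r, h (x * (1 + r)) ∂P ≤ L * |x| := by
  have := hP.integral_le_add (C := L * |x|) hd hL hh (LipZero.zero hL) x x (fun s hs => by
    have h1 := (abs_le.1 (hh.1 (x * s) 0)).2
    rw [hh.2, sub_zero, sub_zero, abs_mul, abs_of_nonneg hs] at h1
    linarith)
  simpa using this

/-! ### One step of the recursion -/

lemma le_stepValue {A : Set ℝ} {b d L : ℝ} (hd : d < 1) (hA : A ⊆ Set.Icc (-d) b) {h : ℝ → ℝ}
    (hL : 0 ≤ L) (hh : LipZero L h) (x : ℝ) {P : Measure ℝ} (hP : RiskNeutral A P) :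
    ∫ r, h (x * (1 + r)) ∂P ≤ stepValue A h x := by
  refine le_csSup ⟨L * |x|, ?_⟩ ⟨P, hP.1, hP.2.1, hP.2.2, rfl⟩
  rintro v ⟨Q, h1, h2, h3, rfl⟩
  exact (RiskNeutral.mono hA ⟨h1, h2, h3⟩).integral_le hd hL hh x

lemma stepValue_le {A : Set ℝ} (hne : ∃ P, RiskNeutral A P) {h : ℝ → ℝ} {x M : ℝ}
    (hM : ∀ P, RiskNeutral A P → ∫ r, h (x * (1 + r)) ∂P ≤ M) : stepValue A h x ≤ M := by
  obtain ⟨P, hP⟩ := hne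
  refine csSup_le ⟨_, P, hP.1, hP.2.1, hP.2.2, rfl⟩ ?_
  rintro v ⟨Q, h1, h2, h3, rfl⟩
  exact hM Q ⟨h1, h2, h3⟩

lemma LipZero.stepValue {A : Set ℝ} {b d L : ℝ} (hd : d < 1) (hA : A ⊆ Set.Icc (-d) b)
    (hne : ∃ P, RiskNeutral A P) {h : ℝ → ℝ} (hL : 0 ≤ L) (hh : LipZero L h) :
    LipZero L (stepValue A h) := by
  have key : ∀ x y, _root_.stepValue A h x ≤ _root_.stepValue A h y + L * |x - y| := by
    refine fun x y => stepValue_le hne fun P hP => ?_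
    have h1 := (hP.mono hA).integral_le_add (C := L * |x - y|) hd hL hh hh x y (fun s hs => by
      have h1 := (abs_le.1 (hh.1 (x * s) (y * s))).2
      rw [← sub_mul, abs_mul, abs_of_nonneg hs] at h1
      linarith)
    linarith [le_stepValue hd hA hL hh y hP]
  refine ⟨fun x y => abs_le.2 ⟨?_, ?_⟩, ?_⟩
  · have := key y x
    rw [abs_sub_comm] at this
    linarith
  · linarith [key x y]
  · obtain ⟨P, hP⟩ := hne
    apply le_antisymm
    · exact stepValue_le ⟨P, hP⟩ fun Q _ => by simp [hh.2]
    · simpa [hh.2] using le_stepValue hd hA hL hh 0 hP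

lemma stepValue_mono {A B : Set ℝ} {b d L : ℝ} (hd : d < 1) (hAB : A ⊆ B)
    (hB : B ⊆ Set.Icc (-d) b) (hne : ∃ P, RiskNeutral A P) {h₁ h₂ : ℝ → ℝ} (hL : 0 ≤ L)
    (hh₁ : LipZero L h₁) (hh₂ : LipZero L h₂) (hle : ∀ x, h₁ x ≤ h₂ x) (x : ℝ) :
    stepValue A h₁ x ≤ stepValue B h₂ x := by
  refine stepValue_le hne fun P hP => ?_
  have h1 := (hP.mono (hAB.trans hB)).integral_le_add (C := 0) hd hL hh₁ hh₂ x x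
    (fun s _ => by simpa using hle (x * s))
  linarith [le_stepValue hd hB hL hh₂ x (hP.mono hAB)]

/-! ### Rounding to the grid -/

/-- The piecewise linear hat function of height one centred at `k`, with support
`[k - 1, k + 1]`. -/
noncomputable def hat (k : ℕ) (s : ℝ) : ℝ := max 0 (1 - |s - k|)

lemma hat_nonneg (k : ℕ) (s : ℝ) : 0 ≤ hat k s := le_max_left _ _

lemma continuous_hat (k : ℕ) : Continuous (hat k) := by unfold hat; fun_prop

lemma hat_mul_abs_le (k : ℕ) (s : ℝ) : hat k s * |s - k| ≤ hat k s := by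
  rcases le_total (|s - k|) 1 with h | h
  · exact mul_le_of_le_one_right (hat_nonneg k s) h
  · simp [hat, h]

/-- The closed forms of the partial sums of `hat k s` and `k * hat k s`, in the three possible
positions of `s` relative to the last index `n`. -/
lemma sum_hat_aux (n : ℕ) (s : ℝ) (hs : 0 ≤ s) :
    (s ≤ n → ∑ k ∈ Finset.range (n + 1), hat k s = 1 ∧
      ∑ k ∈ Finset.range (n + 1), k * hat k s = s) ∧
    (n ≤ s → s ≤ n + 1 → ∑ k ∈ Finset.range (n + 1), hat k s = n + 1 - s ∧
      ∑ k ∈ Finset.range (n + 1), k * hat k s = n * (n + 1 - s)) ∧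
    (n + 1 ≤ s → ∑ k ∈ Finset.range (n + 1), hat k s = 0 ∧
      ∑ k ∈ Finset.range (n + 1), k * hat k s = 0) := by
  induction n with
  | zero =>
    refine ⟨fun h => ?_, fun h h' => ?_, fun h => ?_⟩
    · have : s = 0 := le_antisymm (by simpa using h) hs
      simp [hat, this]
    · simp only [Nat.cast_zero, zero_add] at h h'
      simp [hat, abs_of_nonneg hs, h']
    · simp only [Nat.cast_zero, zero_add] at h
      simp [hat, abs_of_nonneg hs, h]
  | succ n ih =>
    obtain ⟨ih1, ih2, ih3⟩ := ih
    rw [Finset.sum_range_succ _ (n + 1), Finset.sum_range_succ _ (n + 1)]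
    push_cast
    refine ⟨fun h => ?_, fun h h' => ?_, fun h => ?_⟩
    · rcases le_total s n with h1 | h1
      · have : hat (n + 1) s = 0 := by
          refine max_eq_left ?_
          push_cast
          linarith [neg_abs_le (s - (n + 1))]
        rw [this, (ih1 h1).1, (ih1 h1).2]
        simp
      · have : hat (n + 1) s = s - n := by
          unfold hat
          push_cast
          rw [abs_of_nonpos (by linarith), max_eq_right (by linarith)]
          ring
        rw [this, (ih2 h1 h).1, (ih2 h1 h).2]
        constructor <;> ring
    · have : hat (n + 1) s = n + 2 - s := by
        unfold hat
        push_cast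
        rw [abs_of_nonneg (by linarith), max_eq_right (by linarith)]
        ring
      rw [this, (ih3 h).1, (ih3 h).2]
      constructor <;> ring
    · have : hat (n + 1) s = 0 := by
        refine max_eq_left ?_
        push_cast
        linarith [le_abs_self (s - (n + 1))]
      rw [this, (ih3 (by linarith)).1, (ih3 (by linarith)).2]
      simp

/-- Every risk-neutral measure on the interval can be rounded to one on the grid, changing the
expectation of a `K`-Lipschitz function by at most `K ε`. -/
lemma RiskNeutral.exists_round {d b ε : ℝ} {n : ℕ} (hε : 0 < ε) (hn : d + b = n * ε)
    {P : Measure ℝ} (hP : RiskNeutral (Set.Icc (-d) b) P) :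
    ∃ Q, RiskNeutral (gridSet d ε n) Q ∧ ∀ (K : ℝ) (f : ℝ → ℝ), 0 ≤ K →
      (∀ r s, |f r - f s| ≤ K * |r - s|) → ∫ r, f r ∂P ≤ ∫ r, f r ∂Q + K * ε := by
  have hprob := hP.1
  -- `φ k` is the hat function centred at the grid point `-d + k ε`.
  set φ : ℕ → ℝ → ℝ := fun k r => hat k ((r + d) / ε) with hφ
  have hφc : ∀ k, Continuous (φ k) := fun k => (continuous_hat k).comp (by fun_prop)
  have hφ0 : ∀ k r, 0 ≤ φ k r := fun k r => hat_nonneg _ _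
  have hsum : ∀ r ∈ Set.Icc (-d) b, ∑ k ∈ Finset.range (n + 1), φ k r = 1 ∧
      ∑ k ∈ Finset.range (n + 1), φ k r * (-d + k * ε) = r := by
    intro r hr
    have h0 : 0 ≤ (r + d) / ε := div_nonneg (by linarith [hr.1]) hε.le
    have h1 : (r + d) / ε ≤ n := by
      rw [div_le_iff₀ hε]
      linarith [hr.2]
    obtain ⟨e1, e2⟩ := (sum_hat_aux n _ h0).1 h1
    refine ⟨e1, ?_⟩
    calc ∑ k ∈ Finset.range (n + 1), φ k r * (-d + k * ε)
        = -d * ∑ k ∈ Finset.range (n + 1), hat k ((r + d) / ε)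
          + ε * ∑ k ∈ Finset.range (n + 1), k * hat k ((r + d) / ε) := by
          rw [Finset.mul_sum, Finset.mul_sum, ← Finset.sum_add_distrib]
          exact Finset.sum_congr rfl fun k _ => by simp only [hφ]; ring
      _ = r := by
          rw [e1, e2]
          field_simp
          ring
  set w : ℕ → ℝ := fun k => ∫ r, φ k r ∂P with hw
  have hw0 : ∀ k, 0 ≤ w k := fun k => integral_nonneg (hφ0 k)
  set Q : Measure ℝ := ∑ k ∈ Finset.range (n + 1),
    ENNReal.ofReal (w k) • Measure.dirac (-d + k * ε) with hQ
  have hint : ∀ f : ℝ → ℝ, ∫ r, f r ∂Q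
      = ∫ r, ∑ k ∈ Finset.range (n + 1), φ k r * f (-d + k * ε) ∂P := by
    intro f
    rw [hQ, integral_finsetSum_measure, integral_finsetSum]
    · refine Finset.sum_congr rfl fun k _ => ?_
      rw [integral_smul_measure, integral_dirac, ENNReal.toReal_ofReal (hw0 k),
        integral_mul_const, smul_eq_mul]
    · exact fun k _ => (hP.integrable (hφc k)).mul_const _
    · exact fun k _ => (integrable_dirac (by simp)).smul_measure ENNReal.ofReal_ne_top
  have hwsum : ∑ k ∈ Finset.range (n + 1), w k = 1 := by
    rw [hw, ← integral_finsetSum _ fun k _ => hP.integrable (hφc k)]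
    rw [integral_congr_ae (g := fun _ => (1 : ℝ))
      (hP.ae_mem.mono fun r hr => (hsum r hr).1)]
    simp
  have hmass : ∀ A : Set ℝ, gridSet d ε n ⊆ A → Q A = 1 := by
    intro A hA
    rw [hQ, Measure.finsetSum_apply]
    rw [← ENNReal.ofReal_one, ← hwsum, ENNReal.ofReal_sum_of_nonneg fun k _ => hw0 k]
    refine Finset.sum_congr rfl fun k hk => ?_
    have : -d + k * ε ∈ A := hA ⟨k, Nat.lt_succ_iff.1 (Finset.mem_range.1 hk), rfl⟩
    rw [Measure.smul_apply, Measure.dirac_apply_of_mem this, smul_eq_mul, mul_one]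
  refine ⟨Q, ⟨⟨hmass _ (Set.subset_univ _)⟩, hmass _ subset_rfl, ?_⟩, ?_⟩
  · rw [hint fun r => r, integral_congr_ae (hP.ae_mem.mono fun r hr => (hsum r hr).2)]
    exact hP.2.2
  · intro K f hK hf
    have hfc := continuous_of_abs_le hK hf
    have hgc : Continuous fun r => ∑ k ∈ Finset.range (n + 1), φ k r * f (-d + k * ε) :=
      continuous_finsetSum _ fun k _ => (hφc k).mul continuous_const
    calc ∫ r, f r ∂P
        ≤ ∫ r, (∑ k ∈ Finset.range (n + 1), φ k r * f (-d + k * ε) + K * ε) ∂P := by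
          refine integral_mono_ae (hP.integrable hfc)
            (hP.integrable (hgc.add continuous_const)) ?_
          filter_upwards [hP.ae_mem] with r hr
          -- Weighted by `φ k r`, the distance from `r` to the grid point is at most `ε`.
          have hterm : ∀ k ∈ Finset.range (n + 1),
              φ k r * f r ≤ φ k r * f (-d + k * ε) + φ k r * (K * ε) := by
            intro k _
            have h1 := (abs_le.1 (hf r (-d + k * ε))).2
            have h2 := hat_mul_abs_le k ((r + d) / ε)
            have h3 : |r - (-d + k * ε)| = ε * |(r + d) / ε - k| := by
              rw [← abs_of_pos hε, ← abs_mul, abs_of_pos hε]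
              congr 1
              field_simp
              ring
            have h4 := mul_le_mul_of_nonneg_left h1 (hφ0 k r)
            have h5 := mul_le_mul_of_nonneg_left h2 (mul_nonneg hK hε.le)
            rw [h3] at h4
            simp only [hφ] at h4 ⊢
            nlinarith
          have h := Finset.sum_le_sum hterm
          rw [Finset.sum_add_distrib, ← Finset.sum_mul, ← Finset.sum_mul, (hsum r hr).1] at h
          linarith
      _ = _ := by
          rw [integral_add (hP.integrable hgc) (integrable_const _), hint]
          simp

lemma gridSet_subset {d b ε : ℝ} {n : ℕ} (hε : 0 < ε) (hn : d + b = n * ε) :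
    gridSet d ε n ⊆ Set.Icc (-d) b := by
  rintro r ⟨k, hk, rfl⟩
  have h1 : (k : ℝ) * ε ≤ n * ε := by gcongr
  have h2 : 0 ≤ (k : ℝ) * ε := by positivity
  exact ⟨by linarith, by linarith⟩

lemma riskNeutral_dirac {d b : ℝ} (hd : 0 ≤ d) (hb : 0 ≤ b) :
    RiskNeutral (Set.Icc (-d) b) (Measure.dirac 0) :=
  ⟨inferInstance, Measure.dirac_apply_of_mem ⟨by linarith, hb⟩, by simp⟩

/-- Replacing the interval by the grid costs at most `L ε |x|` in one step, on top of an error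
`C |x|` already present. -/
lemma stepValue_Icc_le_grid {d b ε L C : ℝ} {n : ℕ} (hd0 : 0 ≤ d) (hd : d < 1) (hb : 0 ≤ b)
    (hε : 0 < ε) (hn : d + b = n * ε) {h₁ h₂ : ℝ → ℝ} (hL : 0 ≤ L)
    (hh₁ : LipZero L h₁) (hh₂ : LipZero L h₂) (hle : ∀ x, h₁ x ≤ h₂ x + C * |x|) (x : ℝ) :
    stepValue (Set.Icc (-d) b) h₁ x ≤ stepValue (gridSet d ε n) h₂ x + (C + L * ε) * |x| := by
  refine stepValue_le ⟨_, riskNeutral_dirac hd0 hb⟩ fun P hP => ?_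
  obtain ⟨Q, hQ, hround⟩ := hP.exists_round hε hn
  have hsub := gridSet_subset hε hn
  have h1 := hround (L * |x|) _ (by positivity) (hh₁.comp_step x)
  have h2 := (hQ.mono hsub).integral_le_add (C := C * |x|) hd hL hh₁ hh₂ x x (fun s hs => by
    have := hle (x * s)
    rw [abs_mul, abs_of_nonneg hs] at this
    linarith)
  have h3 := le_stepValue hd hsub hL hh₂ x hQ
  linarith

theorem stmt_13 :
    ∃ c : ℝ, 0 < c ∧
      ∀ (ζd ζu L S₀ δ : ℝ) (τ n : ℕ) (g : ℝ → ℝ) (G Ghat : ℕ → ℝ → ℝ),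
        0 < ζd → ζd < 1 → 0 < ζu → 0 < L → 0 < S₀ → 1 ≤ τ → 0 < δ →
        c * δ ^ 2 / (L ^ 2 * (τ : ℝ) ^ 2) < min ζd ζu →
        c * δ ^ 2 / (L ^ 2 * (τ : ℝ) ^ 2) ≤ 1 →
        0 < n → ζd + ζu = n * (c * δ ^ 2 / (L ^ 2 * (τ : ℝ) ^ 2)) →
        Monotone g → (∀ x y, |g x - g y| ≤ L * |x - y|) → g 0 = 0 →
        (∀ x, G τ x = g x) →
        (∀ t < τ, ∀ x, G t x = stepValue (Set.Icc (-ζd) ζu) (G (t + 1)) x) →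
        (∀ x, Ghat τ x = g x) →
        (∀ t < τ, ∀ x, Ghat t x =
          stepValue (gridSet ζd (c * δ ^ 2 / (L ^ 2 * (τ : ℝ) ^ 2)) n) (Ghat (t + 1)) x) →
        G 0 S₀ - δ * S₀ ≤ Ghat 0 S₀ ∧ Ghat 0 S₀ ≤ G 0 S₀ := by
  refine ⟨1, one_pos, ?_⟩
  intro d b L S₀ δ τ n g G Ghat hd0 hd hb hL hS hτ hδ _ hε1 _ hn _ hg hg0 hGτ hG hHτ hH
  have hτ0 : (0 : ℝ) < τ := by exact_mod_cast hτ
  set ε := 1 * δ ^ 2 / (L ^ 2 * (τ : ℝ) ^ 2) with hεdef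
  have hε : 0 < ε := by positivity
  have hsub := gridSet_subset hε hn
  have hneI : ∃ P, RiskNeutral (Set.Icc (-d) b) P := ⟨_, riskNeutral_dirac hd0.le hb.le⟩
  -- The grid need not contain `0`, so the Dirac mass at `0` is rounded.
  have hneU : ∃ P, RiskNeutral (gridSet d ε n) P := by
    obtain ⟨Q, hQ, -⟩ := (riskNeutral_dirac hd0.le hb.le).exists_round hε hn
    exact ⟨Q, hQ⟩
  -- Backward induction; `j` is the number of rounds left.
  have key : ∀ j ≤ τ, LipZero L (G (τ - j)) ∧ LipZero L (Ghat (τ - j)) ∧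
      (∀ x, Ghat (τ - j) x ≤ G (τ - j) x) ∧
      (∀ x, G (τ - j) x ≤ Ghat (τ - j) x + (j * (L * ε)) * |x|) := by
    intro j
    induction j with
    | zero =>
      intro _
      have e1 : G τ = g := funext hGτ
      have e2 : Ghat τ = g := funext hHτ
      simp only [Nat.sub_zero, e1, e2]
      exact ⟨⟨hg, hg0⟩, ⟨hg, hg0⟩, fun x => le_rfl, fun x => by simp⟩
    | succ j ih =>
      intro hj
      obtain ⟨i1, i2, i3, i4⟩ := ih (by omega)
      have e : τ - (j + 1) + 1 = τ - j := by omega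
      have e1 : G (τ - (j + 1)) = stepValue (Set.Icc (-d) b) (G (τ - j)) := by
        funext x
        rw [hG _ (by omega), e]
      have e2 : Ghat (τ - (j + 1)) = stepValue (gridSet d ε n) (Ghat (τ - j)) := by
        funext x
        rw [hH _ (by omega), e]
      rw [e1, e2]
      refine ⟨i1.stepValue hd subset_rfl hneI hL.le, i2.stepValue hd hsub hneU hL.le,
        stepValue_mono hd hsub subset_rfl hneU hL.le i2 i1 i3, fun x => ?_⟩
      have := stepValue_Icc_le_grid hd0.le hd hb.le hε hn hL.le i1 i2 i4 x
      push_cast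
      linarith
  obtain ⟨-, -, k3, k4⟩ := key τ le_rfl
  rw [Nat.sub_self] at k3 k4
  refine ⟨?_, k3 S₀⟩
  have h1 := k4 S₀
  rw [abs_of_pos hS] at h1
  -- `ε ≤ 1` amounts to `δ ≤ L τ`, whence `τ L ε = δ² / (L τ) ≤ δ`.
  have hδ' : δ ≤ L * τ := by
    rw [hεdef, div_le_one (by positivity), one_mul, ← mul_pow] at hε1
    exact le_of_sq_le_sq hε1 (by positivity)
  have h2 : τ * (L * ε) ≤ δ := by
    have : τ * (L * ε) = δ * δ / (L * τ) := by
      rw [hεdef]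
      field_simp
    rw [this, div_le_iff₀ (by positivity)]
    exact mul_le_mul_of_nonneg_left hδ' hδ.le
  have h3 := mul_le_mul_of_nonneg_right h2 hS.le
  linarith
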